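/- Let β > 0 and k ≥ 0. Then ∫₀^∞ r·K₀(βr)·J₀(kr) dr = 1/(k² + β²). -/

import Mathlib

open MeasureTheory Real

/-- The modified Bessel function of the second kind of order zero:
`K₀(r) = ∫₀^∞ exp(−r·cosh t) dt`. -/
noncomputable def K0 (r : ℝ) : ℝ := ∫ t in Set.Ioi (0 : ℝ), Real.exp (-r * Real.cosh t)

/-- The Bessel function of the first kind of order zero,
`J₀(x) = (1/(2π)) ∫_{−π}^{π} e^{i x cos θ} dθ` (which is real-valued). -/
noncomputable def J0 (x : ℝ) : ℝ :=
  (1 / (2 * π)) *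
    (∫ θ in Set.Ioc (-π) π, Complex.exp (Complex.I * ((x * Real.cos θ : ℝ) : ℂ))).re

/-! `K₀(β|x|)/2π` is the Green's function of `β² - Δ` in the plane, hence the integral over `t > 0`
of `exp (-β² t)` times the heat kernel at time `t`. The integral of a radial function against
`r J₀(kr) dr` is, up to the factor `2π`, its planar Fourier transform at a frequency of modulus `k`,
which is `exp (-k² t)` for the heat kernel. Exchanging the integrals over `r` and `t` leaves
`∫₀^∞ exp (-(k² + β²) t) dt`. -/

theorem integral_comp_const_mul_exp {E : Type*} [NormedAddCommGroup E] [NormedSpace ℝ E]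
    (g : ℝ → E) {c : ℝ} (hc : 0 < c) :
    ∫ u : ℝ, g (c * exp u) = ∫ s in Set.Ioi (0 : ℝ), s⁻¹ • g s := by
  have image_eq : (fun u => c * exp u) '' Set.univ = Set.Ioi 0 := by
    rw [← Set.image_image (c * ·) exp, Set.image_univ, range_exp, Set.image_mul_left_Ioi hc,
      mul_zero]
  have change := integral_image_eq_integral_abs_deriv_smul MeasurableSet.univ
    (fun u _ => ((hasDerivAt_exp u).const_mul c).hasDerivWithinAt)
    (fun u _ v _ huv => exp_injective (mul_left_cancel₀ hc.ne' huv)) (fun s => s⁻¹ • g s)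
  rw [image_eq, setIntegral_univ] at change
  rw [change]
  refine integral_congr_ae (.of_forall fun u => ?_)
  have hpos : 0 < c * exp u := by positivity
  simp only [abs_of_pos hpos, smul_inv_smul₀ hpos.ne']

theorem integral_exp_neg_mul_sq_norm_mul_cos_inner {V : Type*} [NormedAddCommGroup V]
    [InnerProductSpace ℝ V] [FiniteDimensional ℝ V] [MeasurableSpace V] [BorelSpace V]
    {b : ℝ} (hb : 0 < b) (w : V) :
    ∫ v : V, exp (-b * ‖v‖ ^ 2) * cos (inner ℝ w v) =
      (π / b) ^ (Module.finrank ℝ V / 2 : ℝ) * exp (-‖w‖ ^ 2 / (4 * b)) := by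
  have hb' : 0 < (b : ℂ).re := hb
  have re_exp (v : V) : exp (-b * ‖v‖ ^ 2) * cos (inner ℝ w v) =
      (Complex.exp (-b * ‖v‖ ^ 2 + Complex.I * inner ℝ w v)).re := by
    rw [Complex.exp_re]
    congr 2 <;> simp [← Complex.ofReal_pow]
  have fourier := GaussianFourier.integral_cexp_neg_mul_sq_norm_add hb' Complex.I w
  have value_eq : (π / b : ℂ) ^ (Module.finrank ℝ V / 2 : ℂ) *
      Complex.exp (Complex.I ^ 2 * ‖w‖ ^ 2 / (4 * b)) =
      (((π / b) ^ (Module.finrank ℝ V / 2 : ℝ) * exp (-‖w‖ ^ 2 / (4 * b)) : ℝ) : ℂ) := by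
    push_cast [Complex.ofReal_cpow (div_pos pi_pos hb).le]
    simp only [Complex.I_sq, neg_one_mul]
  simp_rw [re_exp]
  rw [← Complex.ofReal_re (_ * _), ← value_eq, ← fourier]
  exact integral_re (GaussianFourier.integrable_cexp_neg_mul_sq_norm_add hb' Complex.I w)

theorem K0_eq_integral_univ (r : ℝ) : K0 r = 1 / 2 * ∫ u : ℝ, exp (-r * cosh u) := by
  have h := integral_comp_abs (f := fun u => exp (-r * cosh u))
  simp only [cosh_abs] at h
  rw [h, K0]
  ring

theorem integral_cos_mul_cos (x : ℝ) :
    ∫ θ in Set.Ioc (-π) π, cos (x * cos θ) = 2 * π * J0 x := by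
  have integrable : IntegrableOn
      (fun θ : ℝ => Complex.exp (Complex.I * ((x * cos θ : ℝ) : ℂ))) (Set.Ioc (-π) π) :=
    Continuous.integrableOn_Ioc (by fun_prop)
  have re_exp (θ : ℝ) : cos (x * cos θ) =
      (Complex.exp (Complex.I * ((x * cos θ : ℝ) : ℂ))).re := by
    rw [mul_comm Complex.I, Complex.exp_ofReal_mul_I_re]
  have re_integral := integral_re (𝕜 := ℂ) integrable
  simp only [RCLike.re_to_complex] at re_integral
  simp_rw [re_exp, re_integral, J0]
  field_simp

theorem J0_zero : J0 0 = 1 := by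
  have h := integral_cos_mul_cos 0
  simp only [zero_mul, cos_zero, integral_const, MeasurableSet.univ, measureReal_restrict_apply,
    Set.univ_inter, smul_eq_mul, mul_one, volume_real_Ioc_of_le (neg_le_self pi_pos.le)] at h
  exact mul_left_cancel₀ two_pi_pos.ne' (by linarith)

theorem continuous_J0 : Continuous J0 := by
  have J0_eq : J0 = fun x => (2 * π)⁻¹ * ∫ θ in (-π)..π, cos (x * cos θ) := by
    ext x
    rw [intervalIntegral.integral_of_le (neg_le_self pi_pos.le), integral_cos_mul_cos,
      inv_mul_cancel_left₀ two_pi_pos.ne']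
  rw [J0_eq]
  exact continuous_const.mul
    (intervalIntegral.continuous_parametric_intervalIntegral_of_continuous' (by fun_prop) _ _)

theorem abs_J0_le_one (x : ℝ) : |J0 x| ≤ 1 := by
  have bound : ‖∫ θ in Set.Ioc (-π) π, cos (x * cos θ)‖ ≤ 1 * volume.real (Set.Ioc (-π) π) :=
    norm_setIntegral_le_of_norm_le_const measure_Ioc_lt_top fun θ _ => abs_cos_le_one _
  rw [integral_cos_mul_cos, volume_real_Ioc_of_le (neg_le_self pi_pos.le), norm_mul,
    norm_of_nonneg two_pi_pos.le] at bound
  rw [← norm_eq_abs]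
  exact le_of_mul_le_mul_left (by linarith) two_pi_pos

theorem integral_radial_mul_cos {f : ℝ → ℝ}
    (hf : IntegrableOn (fun r => r * f r) (Set.Ioi 0)) (k : ℝ) :
    ∫ z : ℂ, f ‖z‖ * cos (k * z.re) =
      2 * π * ∫ r in Set.Ioi (0 : ℝ), r * f r * J0 (k * r) := by
  have integrable : IntegrableOn (fun p : ℝ × ℝ => p.1 * f p.1 * cos (k * p.1 * cos p.2))
      (Set.Ioi 0 ×ˢ Set.Ioo (-π) π) := by
    rw [IntegrableOn, Measure.volume_eq_prod, ← Measure.prod_restrict]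
    exact (hf.comp_fst _).mul_bdd (Continuous.aestronglyMeasurable (by fun_prop))
      (.of_forall fun p => abs_cos_le_one _)
  calc ∫ z : ℂ, f ‖z‖ * cos (k * z.re)
    _ = ∫ p in Set.Ioi (0 : ℝ) ×ˢ Set.Ioo (-π) π, p.1 * f p.1 * cos (k * p.1 * cos p.2) := by
      rw [← Complex.integral_comp_polarCoord_symm, polarCoord_target]
      refine setIntegral_congr_fun (measurableSet_Ioi.prod measurableSet_Ioo) fun p hp => ?_
      have hp : 0 < p.1 := hp.1
      have re_eq : (Complex.polarCoord.symm p).re = p.1 * cos p.2 := by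
        simp [Complex.polarCoord_symm_apply, -Complex.ofReal_cos, -Complex.ofReal_sin]
      simp only [Complex.norm_polarCoord_symm, abs_of_pos hp, re_eq, smul_eq_mul, mul_assoc]
    _ = ∫ r in Set.Ioi (0 : ℝ), r * f r * ∫ θ in Set.Ioc (-π) π, cos (k * r * cos θ) := by
      rw [Measure.volume_eq_prod, setIntegral_prod _ integrable]
      simp_rw [integral_const_mul, integral_Ioc_eq_integral_Ioo]
    _ = 2 * π * ∫ r in Set.Ioi (0 : ℝ), r * f r * J0 (k * r) := by
      simp_rw [integral_cos_mul_cos, ← integral_const_mul, mul_left_comm (_ * f _)]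

/-- The heat kernel of the Euclidean plane at time `t` and distance `r`. It is used to resolve
`K0` as a superposition of Gaussians, and is meant for `t > 0` only. -/
noncomputable def planarHeatKernel (t r : ℝ) : ℝ := (4 * π * t)⁻¹ * exp (-(4 * t)⁻¹ * r ^ 2)

theorem planarHeatKernel_nonneg {t : ℝ} (ht : 0 ≤ t) (r : ℝ) : 0 ≤ planarHeatKernel t r := by
  unfold planarHeatKernel
  positivity

theorem integrable_mul_planarHeatKernel {t : ℝ} (ht : 0 < t) :
    Integrable fun r => r * planarHeatKernel t r := by
  have h := (integrable_mul_exp_neg_mul_sq (b := (4 * t)⁻¹) (by positivity)).const_mul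
    (4 * π * t)⁻¹
  simpa only [planarHeatKernel, mul_left_comm] using h

theorem integral_mul_planarHeatKernel_mul_J0 {t : ℝ} (ht : 0 < t) (k : ℝ) :
    ∫ r in Set.Ioi (0 : ℝ), r * planarHeatKernel t r * J0 (k * r) =
      (2 * π)⁻¹ * exp (-k ^ 2 * t) := by
  have gaussian : ∫ z : ℂ, exp (-(4 * t)⁻¹ * ‖z‖ ^ 2) * cos (k * z.re) =
      4 * π * t * exp (-k ^ 2 * t) := by
    have h := integral_exp_neg_mul_sq_norm_mul_cos_inner
      (b := (4 * t)⁻¹) (by positivity) (k : ℂ)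
    simp only [Complex.finrank_real_complex, Complex.inner] at h
    convert h using 1
    · simp [mul_comm k]
    · simp only [neg_mul, mul_inv_rev, Nat.cast_ofNat, ne_eq, OfNat.ofNat_ne_zero,
        not_false_eq_true, div_self, rpow_one, Complex.norm_real, norm_eq_abs, sq_abs]
      field_simp
  have radial := integral_radial_mul_cos (integrable_mul_planarHeatKernel ht).integrableOn k
  rw [eq_inv_mul_iff_mul_eq₀ two_pi_pos.ne', ← radial]
  simp_rw [planarHeatKernel, mul_assoc _ (exp _), integral_const_mul, gaussian]
  field_simp

theorem K0_mul_eq_integral_planarHeatKernel {β r : ℝ} (hβ : 0 < β) (hr : 0 < r) :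
    K0 (β * r) =
      2 * π * ∫ t in Set.Ioi (0 : ℝ), exp (-β ^ 2 * t) * planarHeatKernel t r := by
  -- With `t = (r / 2β) eᵘ` one has `β² t + r² / 4t = β r cosh u`.
  have hc : 0 < r / (2 * β) := by positivity
  have exponent (u : ℝ) : -(β * r) * cosh u = -β ^ 2 * (r / (2 * β) * exp u) +
      -(4 * (r / (2 * β) * exp u))⁻¹ * r ^ 2 := by
    rw [cosh_eq, exp_neg]
    field_simp
    ring
  rw [K0_eq_integral_univ]
  simp_rw [exponent]
  rw [integral_comp_const_mul_exp (fun t => exp (-β ^ 2 * t + -(4 * t)⁻¹ * r ^ 2)) hc,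
    ← integral_const_mul, ← integral_const_mul]
  refine integral_congr_ae (.of_forall fun t => ?_)
  simp only [planarHeatKernel, exp_add, smul_eq_mul, mul_inv]
  field_simp
  norm_num

theorem integrable_exp_mul_planarHeatKernel_prod {c : ℝ} (hc : 0 < c) :
    Integrable (fun p : ℝ × ℝ => exp (-c * p.2) * (p.1 * planarHeatKernel p.2 p.1))
      ((volume.restrict (Set.Ioi 0)).prod (volume.restrict (Set.Ioi 0))) := by
  have measurable : Measurable
      fun p : ℝ × ℝ => exp (-c * p.2) * (p.1 * planarHeatKernel p.2 p.1) := by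
    unfold planarHeatKernel
    fun_prop
  have norm_integral {t : ℝ} (ht : 0 < t) :
      ∫ r in Set.Ioi (0 : ℝ), ‖exp (-c * t) * (r * planarHeatKernel t r)‖ =
        (2 * π)⁻¹ * exp (-c * t) := by
    have mass := integral_mul_planarHeatKernel_mul_J0 ht 0
    simp only [zero_mul, J0_zero, mul_one, ne_eq, OfNat.ofNat_ne_zero, not_false_eq_true, zero_pow,
      neg_zero, exp_zero] at mass
    rw [mul_comm (2 * π)⁻¹, ← mass, ← integral_const_mul]
    refine setIntegral_congr_fun measurableSet_Ioi fun r hr => ?_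
    exact norm_of_nonneg (mul_nonneg (exp_nonneg _)
      (mul_nonneg (le_of_lt hr) (planarHeatKernel_nonneg ht.le r)))
  rw [integrable_prod_iff' measurable.aestronglyMeasurable]
  constructor
  · filter_upwards [ae_restrict_mem measurableSet_Ioi] with t ht
    exact (integrable_mul_planarHeatKernel ht).integrableOn.const_mul _
  · have integrable : IntegrableOn (fun t => (2 * π)⁻¹ * exp (-c * t)) (Set.Ioi 0) :=
      (integrableOn_exp_mul_Ioi (neg_neg_of_pos hc) 0).const_mul _
    exact integrable.congr_fun (fun t ht => (norm_integral ht).symm) measurableSet_Ioi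

theorem integral_K0_J0_general (β k : ℝ) (hβ : 0 < β) :
    (∫ r in Set.Ioi (0 : ℝ), r * K0 (β * r) * J0 (k * r)) = 1 / (k ^ 2 + β ^ 2) := by
  have integrable : Integrable (Function.uncurry fun r t =>
      exp (-β ^ 2 * t) * (r * planarHeatKernel t r) * J0 (k * r))
      ((volume.restrict (Set.Ioi 0)).prod (volume.restrict (Set.Ioi 0))) :=
    (integrable_exp_mul_planarHeatKernel_prod (pow_pos hβ 2)).mul_bdd
      (continuous_J0.comp (by fun_prop)).aestronglyMeasurable (.of_forall fun _ => abs_J0_le_one _)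
  calc ∫ r in Set.Ioi (0 : ℝ), r * K0 (β * r) * J0 (k * r)
    _ = 2 * π * ∫ r in Set.Ioi (0 : ℝ), ∫ t in Set.Ioi (0 : ℝ),
          exp (-β ^ 2 * t) * (r * planarHeatKernel t r) * J0 (k * r) := by
      rw [← integral_const_mul]
      refine setIntegral_congr_fun measurableSet_Ioi fun r hr => ?_
      simp_rw [K0_mul_eq_integral_planarHeatKernel hβ hr, integral_mul_const,
        mul_left_comm _ r, integral_const_mul]
      ring
    _ = 2 * π * ∫ t in Set.Ioi (0 : ℝ), exp (-β ^ 2 * t) *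
          ∫ r in Set.Ioi (0 : ℝ), r * planarHeatKernel t r * J0 (k * r) := by
      rw [integral_integral_swap integrable]
      simp_rw [mul_assoc (exp _), integral_const_mul]
    _ = ∫ t in Set.Ioi (0 : ℝ), exp (-(k ^ 2 + β ^ 2) * t) := by
      rw [← integral_const_mul]
      refine setIntegral_congr_fun measurableSet_Ioi fun t ht => ?_
      simp only [integral_mul_planarHeatKernel_mul_J0 ht, neg_add, add_mul, exp_add]
      field_simp
    _ = 1 / (k ^ 2 + β ^ 2) := by
      rw [integral_exp_mul_Ioi (neg_neg_of_pos (by positivity)), mul_zero, exp_zero,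
        neg_div_neg_eq]

/-- `∫₀^∞ r K₀(βr) J₀(kr) dr = 1/(k² + β²)` for `β > 0`, `k ≥ 0`. -/
theorem integral_K0_J0 (β k : ℝ) (hβ : 0 < β) (hk : 0 ≤ k) :
    (∫ r in Set.Ioi (0 : ℝ), r * K0 (β * r) * J0 (k * r)) = 1 / (k ^ 2 + β ^ 2) :=
  integral_K0_J0_general β k hβ
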